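/- For every integer r ≥ 2 and every collectable r-pattern P, asymptotically almost surely z_{{P}}(RM_n^(r)) = Θ(n^(1/r)); that is, there exist constants c₁, c₂ > 0 (depending only on r and P) such that the probability that c₁·n^(1/r) ≤ z_{{P}}(RM_n^(r)) ≤ c₂·n^(1/r) tends to 1 as n → ∞. -/

import Mathlib

open Finset
open scoped Classical

/-- An ordered `r`-matching of size `n`: a partition of `[r*n] = {1,…,r*n}` into `n`
pairwise disjoint `r`-element subsets (the edges). -/
def IsOrderedMatching (r n : ℕ) (M : Finset (Finset ℕ)) : Prop :=
  M.card = n ∧ (∀ e ∈ M, e.card = r) ∧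
  (∀ e ∈ M, ∀ f ∈ M, e ≠ f → Disjoint e f) ∧
  M.biUnion id = Finset.Icc 1 (r * n)

/-- Two disjoint `r`-element sets `e`, `f` form the `r`-pattern `P`: the unique
order-preserving bijection from `e ∪ f` onto `[2r]` maps the pair `{e, f}` onto `P`. -/
def FormsPattern (r : ℕ) (e f : Finset ℕ) (P : Finset (Finset ℕ)) : Prop :=
  ∃ φ : ℕ → ℕ, StrictMonoOn φ ↑(e ∪ f) ∧
    (e ∪ f).image φ = Finset.Icc 1 (2 * r) ∧
    ({e.image φ, f.image φ} : Finset (Finset ℕ)) = P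

/-- A `Ps`-clique: a family of pairwise disjoint `r`-element subsets of `ℕ`, every two of
which form a pattern belonging to `Ps`. -/
def IsClique (r : ℕ) (Ps : Set (Finset (Finset ℕ))) (K : Finset (Finset ℕ)) : Prop :=
  (∀ e ∈ K, e.card = r) ∧ (∀ e ∈ K, ∀ f ∈ K, e ≠ f → Disjoint e f) ∧
  (∀ e ∈ K, ∀ f ∈ K, e ≠ f → ∃ P ∈ Ps, FormsPattern r e f P)

/-- `z_Ps(M)`: the maximum size of a subfamily of `M` that is a `Ps`-clique. -/
noncomputable def zClique (r : ℕ) (Ps : Set (Finset (Finset ℕ))) (M : Finset (Finset ℕ)) : ℕ :=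
  sSup {k | ∃ K : Finset (Finset ℕ), K ⊆ M ∧ IsClique r Ps K ∧ K.card = k}

/-- All ordered `r`-matchings of size `n` (as a finset). -/
noncomputable def matchingFamilies (r n : ℕ) : Finset (Finset (Finset ℕ)) :=
  ((Finset.Icc 1 (r * n)).powerset.powerset).filter (IsOrderedMatching r n)

/-- The probability of the event `A` for a uniformly random ordered `r`-matching of size `n`. -/
noncomputable def prob (r n : ℕ) (A : Finset (Finset ℕ) → Prop) : ℝ :=
  (((matchingFamilies r n).filter A).card : ℝ) / ((matchingFamilies r n).card : ℝ)

/-- Expectation of `X` with respect to a uniformly random ordered `r`-matching of size `n`. -/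
noncomputable def expect (r n : ℕ) (X : Finset (Finset ℕ) → ℝ) : ℝ :=
  (∑ M ∈ matchingFamilies r n, X M) / ((matchingFamilies r n).card : ℝ)

/-- An `r`-partite `r`-pattern: each edge contains exactly one of `{2i-1, 2i}` for each
`i = 1, …, r`. -/
def IsPartitePattern (r : ℕ) (P : Finset (Finset ℕ)) : Prop :=
  IsOrderedMatching r 2 P ∧
  ∀ e ∈ P, ∀ i ∈ Finset.Icc 1 r, (e ∩ {2 * i - 1, 2 * i}).card = 1

/-- An `r`-pattern `P` is collectable if there exist arbitrarily large `{P}`-cliques. -/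
def Collectable (r : ℕ) (P : Finset (Finset ℕ)) : Prop :=
  ∀ k : ℕ, ∃ K : Finset (Finset ℕ), IsClique r {P} K ∧ K.card = k

/-- The word of a pattern `P` over `{A=true, B=false}`: the `j`-th letter is `true` iff
vertex `j` lies in the edge of `P` containing `1`. -/
noncomputable def patternWord (r : ℕ) (P : Finset (Finset ℕ)) : List Bool :=
  (List.range (2 * r)).map (fun j => decide (∃ e ∈ P, 1 ∈ e ∧ j + 1 ∈ e))

/-- `lam` is a splitting of the word `w` into consecutive blocks of the form
`A^t B^t` or `B^t A^t` with half-lengths given by `lam`. -/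
def IsBlockSplitting (w : List Bool) (lam : List ℕ) : Prop :=
  (∀ t ∈ lam, 1 ≤ t) ∧
  ∃ bs : List Bool, bs.length = lam.length ∧
    w = (List.zipWith (fun t b => List.replicate t b ++ List.replicate t !b) lam bs).flatten

/-- The pattern `P` has composition `lam` (the sequence of half-lengths of the blocks of
its unique splitting). -/
def HasComposition (r : ℕ) (P : Finset (Finset ℕ)) (lam : List ℕ) : Prop :=
  IsBlockSplitting (patternWord r P) lam

/-- Two distinct collectable `r`-patterns are harmonious if they have the same composition. -/
def Harmonious (r : ℕ) (P Q : Finset (Finset ℕ)) : Prop :=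
  P ≠ Q ∧ Collectable r P ∧ Collectable r Q ∧
  ∃ lam : List ℕ, HasComposition r P lam ∧ HasComposition r Q lam

/-- A pair of distinct `r`-patterns is a mismatch if exactly one of them is collectable, or
both are collectable but their compositions differ. -/
def Mismatch (r : ℕ) (P Q : Finset (Finset ℕ)) : Prop :=
  P ≠ Q ∧
  ((Collectable r P ∧ ¬ Collectable r Q) ∨
   (¬ Collectable r P ∧ Collectable r Q) ∨
   (Collectable r P ∧ Collectable r Q ∧
     ¬ ∃ lam : List ℕ, HasComposition r P lam ∧ HasComposition r Q lam))

/-- The trace of an ordered `r`-matching of size `k` on `[rk]`: the `j`-th letter equals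
`i` when `j` is the `i`-th smallest element of the edge containing `j`. -/
noncomputable def trace (r k : ℕ) (M : Finset (Finset ℕ)) : List ℕ :=
  (List.range (r * k)).map (fun j₀ =>
    ((Finset.Icc 1 (r * k)).filter
      (fun x => x ≤ j₀ + 1 ∧ ∃ e ∈ M, j₀ + 1 ∈ e ∧ x ∈ e)).card)

/-- `a_Ps(k)`: the number of `Ps`-cliques of size `k` whose edges partition `[rk]`. -/
noncomputable def cliqueCount (r : ℕ) (Ps : Set (Finset (Finset ℕ))) (k : ℕ) : ℕ :=
  (((Finset.Icc 1 (r * k)).powerset.powerset).filter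
    (fun M => IsOrderedMatching r k M ∧ IsClique r Ps M)).card

/-- The maximum size of any `Ps`-clique whatsoever. -/
noncomputable def maxCliqueSize (r : ℕ) (Ps : Set (Finset (Finset ℕ))) : ℕ :=
  sSup {k | ∃ K : Finset (Finset ℕ), IsClique r Ps K ∧ K.card = k}

/-- `M` contains a copy of the ordered `r`-matching `H` of size `k`: a subfamily `N ⊆ M` of
`k` edges such that the order-preserving bijection from the union of the edges of `N`
onto `[rk]` maps `N` onto `H`. -/
def ContainsCopy (r k : ℕ) (H M : Finset (Finset ℕ)) : Prop :=
  ∃ N ⊆ M, N.card = k ∧ ∃ φ : ℕ → ℕ,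
    StrictMonoOn φ ↑(N.biUnion id) ∧
    (N.biUnion id).image φ = Finset.Icc 1 (r * k) ∧
    N.image (fun e => e.image φ) = H

/-- Delete the `j`-th smallest element of the finite set `e`. -/
def deleteJth (j : ℕ) (e : Finset ℕ) : Finset ℕ :=
  e.filter (fun x => (e.filter (· ≤ x)).card ≠ j)

/-- Relabel the elements of `e` order-preservingly by their ranks in `V`. -/
def relabel (V : Finset ℕ) (e : Finset ℕ) : Finset ℕ :=
  e.image (fun x => (V.filter (· ≤ x)).card)

/-- `S^(−j)`: delete from each edge of the pattern `S` its `j`-th smallest element and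
relabel the remaining vertices order-preservingly. -/
def patternDelete (j : ℕ) (S : Finset (Finset ℕ)) : Finset (Finset ℕ) :=
  (S.image (deleteJth j)).image (relabel ((S.image (deleteJth j)).biUnion id))

/-! Upper bound: a clique of size `k` consists of `k` edges whose `c`-th smallest vertices form, for
every `c`, a monotone sequence in a direction prescribed by `P`. Fill an `n × r` array uniformly at
random and let its rows be the edges. Once the `k` rows and the order of the cells within each of
them are chosen, in at most `(n * r!) ^ k` ways, the `r` sequences are all monotone with probability
at most `1 / k! ^ r`. As `k! ^ r` is at least `(k / e) ^ (r * k)`, the union bound is exponentially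
small in `k` when `k ^ r` is a large multiple of `n`.

Lower bound: fix a clique of size `2 * m`, label the cells of the array by independent uniform
vertices of this clique, and rank the cells by label, ties broken at random. The rows whose
labels spell an edge of the clique yield edges of the matching that form the same patterns. Each
edge is spelled by a given row with probability `1 / (2 * r * m) ^ r`, and for
`n ≥ 3 * (2 * r * m) ^ r` the union bound over the sets of `m` missing edges shows that at least
half of the clique is spelled, except with probability at most `2 ^ (-m)`.
-/

section Counting

theorem card_filter_comp_eq_mul {Ω S : Type*} [Fintype Ω] [DecidableEq S] {F : Ω → S} {T : Finset S}
    {c : ℕ} (hF : ∀ ω, F ω ∈ T) (hfiber : ∀ t ∈ T, #{ω | F ω = t} = c) (A : S → Prop) :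
    #{ω | A (F ω)} = #{t ∈ T | A t} * c := by
  rw [card_eq_sum_card_fiberwise (f := F) (t := {t ∈ T | A t})
    fun ω hω ↦ mem_filter.mpr ⟨hF ω, (mem_filter.mp hω).2⟩]
  refine sum_const_nat fun t ht ↦ ?_
  obtain ⟨htT, hAt⟩ := mem_filter.mp ht
  rw [← hfiber t htT, filter_filter]
  congr 1
  ext ω
  simp only [mem_filter, mem_univ, true_and, and_iff_right_iff_imp]
  rintro rfl
  exact hAt

theorem card_le_choose_mul_sub_pow {τ α : Type*} [Fintype τ] {s D : Finset α}
    {G : Finset (τ → α)} {m : ℕ} (hs : s ⊆ D) (hD : ∀ g ∈ G, ∀ i, g i ∈ D)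
    (hmiss : ∀ g ∈ G, ∃ A ⊆ s, #A = m ∧ ∀ i, g i ∉ A) :
    #G ≤ (#s).choose m * (#D - m) ^ Fintype.card τ := by
  have hcover : G ⊆ (powersetCard m s).biUnion fun A ↦ Fintype.piFinset fun _ ↦ D \ A := by
    intro g hg
    obtain ⟨A, hA, hAm, hgA⟩ := hmiss g hg
    exact mem_biUnion.mpr ⟨A, mem_powersetCard.mpr ⟨hA, hAm⟩,
      Fintype.mem_piFinset.mpr fun i ↦ mem_sdiff.mpr ⟨hD g hg i, hgA i⟩⟩
  rw [← card_powersetCard]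
  refine (card_le_card hcover).trans (card_biUnion_le_card_mul _ _ _ fun A hA ↦ ?_)
  obtain ⟨hAs, rfl⟩ := mem_powersetCard.mp hA
  rw [Fintype.card_piFinset, prod_const, card_univ, card_sdiff_of_subset (hAs.trans hs)]

/-- The ranking `σ` is obtained from the labelling `f` by breaking ties: points with a smaller
label come first. -/
def Refines {α β U : Type*} [LT β] [LT U] (σ : α ≃ β) (f : α → U) : Prop :=
  ∀ ⦃u v⦄, f u < f v → σ u < σ v

theorem exists_refines {α β U : Type*} [Finite β] [LinearOrder β] [LinearOrder U] (e : α ≃ β)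
    (f : α → U) : ∃ σ : α ≃ β, Refines σ f := by
  have := Fintype.ofFinite β
  let o := Fintype.orderIsoFinOfCardEq β rfl
  let g : Fin (Fintype.card β) → U := f ∘ e.symm ∘ o
  refine ⟨e.trans (o.symm.toEquiv.trans ((Tuple.sort g).symm.trans o.toEquiv)), fun u v huv ↦ ?_⟩
  refine o.strictMono (lt_of_not_ge fun hle ↦ huv.not_ge ?_)
  simpa [g] using Tuple.monotone_sort g hle

/-- Double counting: `(σ, f) ↦ (f ∘ π, π)`, with `π` the permutation of `α` carrying `σ` to the
chosen refinement of `f`, is injective, and `σ` refines `f ∘ π`. -/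
theorem card_mul_card_pow_le_of_refines {α β U : Type*} [Fintype α] [Fintype (α ≃ β)]
    [LinearOrder β] [LinearOrder U] (V : Finset U)
    {B : Finset (α ≃ β)} {C : Finset (α → U)}
    (h : ∀ σ ∈ B, ∀ f, (∀ u, f u ∈ V) → Refines σ f → f ∈ C) :
    #B * #V ^ Fintype.card α ≤ #C * Fintype.card (α ≃ β) := by
  rcases isEmpty_or_nonempty (α ≃ β) with _ | ⟨⟨e⟩⟩
  · simp [B.eq_empty_of_isEmpty]
  have := Finite.of_equiv α e
  choose s hs using fun f : α → U ↦ exists_refines e f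
  have hV : #(Fintype.piFinset fun _ : α ↦ V) = #V ^ Fintype.card α := by simp
  rw [Fintype.card_congr (Equiv.equivCongr (.refl α) e.symm), ← hV, ← card_univ, ← card_product,
    ← card_product]
  refine card_le_card_of_injOn
    (fun p ↦ (p.2 ∘ p.1.trans (s p.2).symm, p.1.trans (s p.2).symm)) ?_ ?_
  · rintro ⟨σ, f⟩ hp
    simp only [coe_product, Set.mem_prod, mem_coe, mem_univ, and_true, Fintype.mem_piFinset]
      at hp ⊢
    exact h σ hp.1 _ (fun u ↦ hp.2 _) fun u v huv ↦ by simpa using hs f huv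
  · rintro ⟨σ, f⟩ - ⟨τ, g⟩ - heq
    obtain ⟨hfg, hπ⟩ := Prod.mk.inj heq
    obtain rfl : f = g := by
      rw [hπ] at hfg
      exact (τ.trans (s g).symm).surjective.injective_comp_right hfg
    obtain rfl : σ = τ := Equiv.ext fun v ↦ by simpa using Equiv.congr_fun hπ v
    rfl

/-- The sequence `x` is strictly increasing if `s` holds and strictly decreasing otherwise. -/
def HasDirection {ι β : Type*} [Preorder ι] [Preorder β] (s : Prop) (x : ι → β) : Prop :=
  if s then StrictMono x else StrictAnti x

namespace HasDirection

variable {ι β : Type*} [LinearOrder ι] {s : Prop} {x y : ι → β}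

theorem injective [Preorder β] (hx : HasDirection s x) : Function.Injective x := by
  unfold HasDirection at hx
  split_ifs at hx
  exacts [hx.injective, hx.injective]

theorem eq_of_range_eq [Finite ι] [PartialOrder β] (hx : HasDirection s x) (hy : HasDirection s y)
    (h : Set.range x = Set.range y) : x = y := by
  unfold HasDirection at hx hy
  split_ifs at hx hy
  exacts [(hx.range_inj hy).mp h, (hx.range_inj hy).mp h]

theorem perm_eq_of_comp_eq [Finite ι] [PartialOrder β] {ρ τ : Equiv.Perm ι}
    (hx : HasDirection s x) (hy : HasDirection s y) (h : x ∘ ρ = y ∘ τ) : ρ = τ := by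
  have hrange : Set.range x = Set.range y := by
    rw [← ρ.surjective.range_comp x, h, τ.surjective.range_comp]
  obtain rfl := hx.eq_of_range_eq hy hrange
  exact Equiv.ext fun a ↦ hx.injective (congrFun h a)

end HasDirection

/-- Permuting each of the sequences `a ↦ σ (J (a, c))` independently gives `(card ι)! ^ card κ`
bijections, from which both `σ` and the permutations can be recovered. -/
theorem card_hasDirection_mul_factorial_pow_le {ι κ α β : Type*} [LinearOrder ι] [Fintype ι]
    [Fintype κ] [Fintype (α ≃ β)] [PartialOrder β] {s : κ → Prop} (J : ι × κ ↪ α)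
    {B : Finset (α ≃ β)} (hB : ∀ σ ∈ B, ∀ c, HasDirection (s c) fun a ↦ σ (J (a, c))) :
    #B * (Fintype.card ι).factorial ^ Fintype.card κ ≤ Fintype.card (α ≃ β) := by
  have hperm : (Fintype.card ι).factorial ^ Fintype.card κ =
      #(univ : Finset (κ → Equiv.Perm ι)) := by
    simp [Fintype.card_perm]
  rw [hperm, ← card_product, ← card_univ]
  refine card_le_card_of_injOn
    (fun p ↦ (Equiv.Perm.viaEmbedding (Equiv.prodCongrLeft p.2) J).trans p.1) (fun _ _ ↦ by simp) ?_
  rintro ⟨σ, ρ⟩ hσ ⟨τ, ρ'⟩ hτ (heq : Equiv.trans _ σ = Equiv.trans _ τ)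
  simp only [coe_product, Set.mem_prod, mem_coe, mem_univ, and_true] at hσ hτ
  have hρ : ρ = ρ' := funext fun c ↦
    (hB σ hσ c).perm_eq_of_comp_eq (hB τ hτ c) <| funext fun a ↦ by
      simpa [Equiv.Perm.viaEmbedding_apply] using Equiv.congr_fun heq (J (a, c))
  subst hρ
  obtain rfl : σ = τ := Equiv.ext fun v ↦ by
    simpa using Equiv.congr_fun heq
      ((Equiv.Perm.viaEmbedding (Equiv.prodCongrLeft ρ) J).symm v)
  rfl

end Counting

section Vertices

variable {r : ℕ} {e f : Finset ℕ}

/-- The elements of an `r`-element set in increasing order, indexed from `0`. The junk value is `0`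
if the set does not have `r` elements. -/
noncomputable def vertex (r : ℕ) (e : Finset ℕ) (c : Fin r) : ℕ :=
  if h : #e = r then e.orderEmbOfFin h c else 0

theorem vertex_eq_orderEmbOfFin (h : #e = r) : vertex r e = e.orderEmbOfFin h :=
  funext fun _ ↦ dif_pos h

theorem vertex_mem (h : #e = r) (c : Fin r) : vertex r e c ∈ e := by
  rw [vertex_eq_orderEmbOfFin h]
  exact orderEmbOfFin_mem _ _ _

theorem vertex_strictMono (h : #e = r) : StrictMono (vertex r e) := by
  rw [vertex_eq_orderEmbOfFin h]
  exact (e.orderEmbOfFin h).strictMono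

theorem image_vertex_univ (h : #e = r) : univ.image (vertex r e) = e := by
  rw [vertex_eq_orderEmbOfFin h]
  exact image_orderEmbOfFin_univ e h

theorem exists_perm_apply_eq_vertex {x : Fin r → ℕ} (h : #e = r) (hx : univ.image x = e) :
    ∃ π : Equiv.Perm (Fin r), x ∘ π = vertex r e := by
  have hmem : ∀ c, ∃ d, x d = vertex r e c := fun c ↦ by
    simpa using (Finset.ext_iff.mp hx (vertex r e c)).mpr (vertex_mem h c)
  choose d hd using hmem
  have hinj : Function.Injective d := fun a b hab ↦
    (vertex_strictMono h).injective (by rw [← hd, ← hd, hab])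
  exact ⟨Equiv.ofBijective d (Finite.injective_iff_bijective.mp hinj), funext hd⟩

theorem vertex_image {φ : ℕ → ℕ} (h : #e = r) (hφ : StrictMonoOn φ e) :
    vertex r (e.image φ) = φ ∘ vertex r e := by
  have hcard : #(e.image φ) = r := (card_image_of_injOn hφ.injOn).trans h
  rw [vertex_eq_orderEmbOfFin hcard]
  exact (orderEmbOfFin_unique hcard (fun c ↦ mem_image_of_mem φ (vertex_mem h c))
    fun a b hab ↦ hφ (vertex_mem h a) (vertex_mem h b) (vertex_strictMono h hab)).symm

theorem vertex_ne_of_disjoint (he : #e = r) (hf : #f = r) (hef : Disjoint e f) (c : Fin r) :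
    vertex r e c ≠ vertex r f c := fun h ↦
  disjoint_left.mp hef (vertex_mem he c) (h ▸ vertex_mem hf c)

end Vertices

section Patterns

variable {r : ℕ} {P : Finset (Finset ℕ)} {e f : Finset ℕ}

theorem FormsPattern.of_image {ψ : ℕ → ℕ} (hψ : StrictMonoOn ψ ↑(e ∪ f))
    (h : FormsPattern r (e.image ψ) (f.image ψ) P) : FormsPattern r e f P := by
  obtain ⟨φ, hφ, hrange, hP⟩ := h
  rw [← image_union] at hφ hrange
  refine ⟨φ ∘ ψ, hφ.comp hψ fun x hx ↦ mem_image_of_mem ψ hx, ?_, ?_⟩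
  · rw [← image_image, hrange]
  · rw [← image_image, ← image_image, hP]

variable [NeZero r]

/-- Two edges of the pattern `P` are ordered in the same way by their first and by their `c`-th
vertices. -/
def Ascends (r : ℕ) [NeZero r] (P : Finset (Finset ℕ)) (c : Fin r) : Prop :=
  ∃ e ∈ P, ∃ f ∈ P, vertex r e 0 < vertex r f 0 ∧ vertex r e c < vertex r f c

theorem FormsPattern.vertex_lt_vertex_iff (h : FormsPattern r e f P) (he : #e = r) (hf : #f = r)
    (h0 : vertex r e 0 < vertex r f 0) (c : Fin r) :
    vertex r e c < vertex r f c ↔ Ascends r P c := by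
  obtain ⟨φ, hφ, -, rfl⟩ := h
  rw [coe_union] at hφ
  have hve : ∀ c, vertex r (e.image φ) c = φ (vertex r e c) :=
    congrFun (vertex_image he (hφ.mono Set.subset_union_left))
  have hvf : ∀ c, vertex r (f.image φ) c = φ (vertex r f c) :=
    congrFun (vertex_image hf (hφ.mono Set.subset_union_right))
  have hlt : ∀ c, φ (vertex r e c) < φ (vertex r f c) ↔ vertex r e c < vertex r f c := fun c ↦
    hφ.lt_iff_lt (.inl (vertex_mem he c)) (.inr (vertex_mem hf c))
  have hnot : ¬ φ (vertex r f 0) < φ (vertex r e 0) := ((hlt 0).mpr h0).not_gt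
  simp [Ascends, hve, hvf, hlt, h0, hnot]

end Patterns

section Cliques

variable {r : ℕ} {Ps : Set (Finset (Finset ℕ))} {K L M : Finset (Finset ℕ)}

theorem IsClique.mono (hK : IsClique r Ps K) (hL : L ⊆ K) : IsClique r Ps L :=
  ⟨fun e he ↦ hK.1 e (hL he), fun e he f hf ↦ hK.2.1 e (hL he) f (hL hf),
    fun e he f hf ↦ hK.2.2 e (hL he) f (hL hf)⟩

theorem IsClique.card_biUnion (hK : IsClique r Ps K) : #(K.biUnion id) = r * #K := by
  rw [Finset.card_biUnion (t := id) hK.2.1, mul_comm]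
  exact sum_const_nat hK.1

theorem IsClique.of_monotoneOn_image {ψ : ℕ → ℕ} (hcard : ∀ e ∈ L, #e = r)
    (hdisj : ∀ e ∈ L, ∀ f ∈ L, e ≠ f → Disjoint e f) (hψ : MonotoneOn ψ ↑(L.biUnion id))
    (hinj : Set.InjOn (image ψ) L) (hK : IsClique r Ps (L.image (image ψ))) :
    IsClique r Ps L := by
  refine ⟨hcard, hdisj, fun e he f hf hef ↦ ?_⟩
  have he' : e.image ψ ∈ L.image (image ψ) := mem_image_of_mem _ he
  have hf' : f.image ψ ∈ L.image (image ψ) := mem_image_of_mem _ hf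
  have hef' : e.image ψ ≠ f.image ψ := fun h ↦ hef (hinj he hf h)
  obtain ⟨P, hP, hform⟩ := hK.2.2 _ he' _ hf' hef'
  have hψinj : Set.InjOn ψ ↑(e ∪ f) := by
    rw [← card_image_iff, image_union, card_union_of_disjoint (hK.2.1 _ he' _ hf' hef'),
      card_union_of_disjoint (hdisj e he f hf hef), hK.1 _ he', hK.1 _ hf', hcard e he,
      hcard f hf]
  have hsub : e ∪ f ⊆ L.biUnion id :=
    union_subset (subset_biUnion_of_mem id he) (subset_biUnion_of_mem id hf)
  exact ⟨P, hP, hform.of_image ((hψ.mono (coe_subset.mpr hsub)).strictMonoOn_of_injOn hψinj)⟩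

theorem bddAbove_card_isClique_subset :
    BddAbove {k | ∃ K : Finset (Finset ℕ), K ⊆ M ∧ IsClique r Ps K ∧ #K = k} := by
  refine ⟨#M, ?_⟩
  rintro _ ⟨K, hKM, -, rfl⟩
  exact card_le_card hKM

theorem IsClique.card_le_zClique (hK : IsClique r Ps K) (hKM : K ⊆ M) : #K ≤ zClique r Ps M :=
  le_csSup bddAbove_card_isClique_subset ⟨K, hKM, hK, rfl⟩

theorem exists_isClique_card_eq {k : ℕ} (hk : k ≤ zClique r Ps M) :
    ∃ K ⊆ M, IsClique r Ps K ∧ #K = k := by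
  obtain ⟨K, hKM, hK, hKz⟩ : zClique r Ps M ∈
      {k | ∃ K : Finset (Finset ℕ), K ⊆ M ∧ IsClique r Ps K ∧ #K = k} :=
    Nat.sSup_mem ⟨0, ∅, by simp, by simp [IsClique], rfl⟩ bddAbove_card_isClique_subset
  obtain ⟨L, hLK, rfl⟩ := exists_subset_card_eq (hk.trans_eq hKz.symm)
  exact ⟨L, hLK.trans hKM, hK.mono hLK, rfl⟩

theorem IsClique.card_filter_mem_image_le_zClique {ψ : ℕ → ℕ} (hK : IsClique r Ps K)
    (hcard : ∀ e ∈ M, #e = r) (hdisj : ∀ e ∈ M, ∀ f ∈ M, e ≠ f → Disjoint e f)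
    (hψ : MonotoneOn ψ ↑(M.biUnion id)) :
    #{e ∈ K | e ∈ M.image (image ψ)} ≤ zClique r Ps M := by
  have hsurj : Set.SurjOn (image ψ) M ↑({e ∈ K | e ∈ M.image (image ψ)} : Finset _) :=
    surjOn_iff_subset_image.mpr fun e he ↦ (mem_filter.mp he).2
  obtain ⟨L, hLM, hinj, hL⟩ := exists_subset_injOn_image_eq_of_surjOn _ _ hsurj
  rw [coe_subset] at hLM
  have hLclique : IsClique r Ps L := .of_monotoneOn_image (fun e he ↦ hcard e (hLM he))
    (fun e he f hf ↦ hdisj e (hLM he) f (hLM hf))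
    (hψ.mono (coe_subset.mpr (biUnion_subset_biUnion_of_subset_left id hLM))) hinj
    (hL ▸ hK.mono (filter_subset _ _))
  rw [← hL, card_image_of_injOn hinj]
  exact hLclique.card_le_zClique hLM

theorem IsClique.exists_hasDirection_vertex [NeZero r] {P : Finset (Finset ℕ)}
    (hK : IsClique r {P} K) :
    ∃ E : Fin #K → Finset ℕ, (∀ a, E a ∈ K) ∧
      ∀ c, HasDirection (Ascends r P c) fun a ↦ vertex r (E a) c := by
  have hinj : Set.InjOn (fun e ↦ vertex r e 0) K := fun e he f hf h ↦ by
    by_contra hef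
    exact vertex_ne_of_disjoint (hK.1 e he) (hK.1 f hf) (hK.2.1 e he f hf hef) 0 h
  let o := (K.image fun e ↦ vertex r e 0).orderEmbOfFin (card_image_of_injOn hinj)
  have ho : ∀ a, ∃ e ∈ K, vertex r e 0 = o a := fun a ↦
    mem_image.mp (orderEmbOfFin_mem _ (card_image_of_injOn hinj) a)
  choose E hEK hE using ho
  have hEcard : ∀ a, #(E a) = r := fun a ↦ hK.1 _ (hEK a)
  have hfirst : ∀ a b, a < b → vertex r (E a) 0 < vertex r (E b) 0 := fun a b hab ↦ by
    rw [hE, hE]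
    exact o.strictMono hab
  have hEinj : ∀ a b, a < b → E a ≠ E b := fun a b hab h ↦ (hfirst a b hab).ne (by rw [h])
  have hiff : ∀ a b, a < b → ∀ c, vertex r (E a) c < vertex r (E b) c ↔ Ascends r P c := by
    intro a b hab
    obtain ⟨_, rfl, hform⟩ := hK.2.2 _ (hEK a) _ (hEK b) (hEinj a b hab)
    exact hform.vertex_lt_vertex_iff (hEcard a) (hEcard b) (hfirst a b hab)
  refine ⟨E, hEK, fun c ↦ ?_⟩
  unfold HasDirection
  split_ifs with hc <;> intro a b hab
  · exact (hiff a b hab c).mpr hc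
  · refine lt_of_le_of_ne (not_lt.mp (mt (hiff a b hab c).mp hc)) ?_
    exact (vertex_ne_of_disjoint (hEcard a) (hEcard b)
      (hK.2.1 _ (hEK a) _ (hEK b) (hEinj a b hab)) c).symm

end Cliques

section Arrangements

variable {r n : ℕ}

/-- A bijective filling of an `n × r` array with `1, …, r * n`. The rows of a uniformly random
arrangement form a uniformly random ordered `r`-matching of size `n`. -/
abbrev Arrangement (r n : ℕ) : Type := (Fin n × Fin r) ≃ ↥(Icc 1 (r * n))

namespace Arrangement

variable (σ : Arrangement r n)

/-- The set of entries of the `i`-th row of an arrangement. -/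
noncomputable def edge (i : Fin n) : Finset ℕ :=
  univ.image fun c : Fin r ↦ (σ (i, c) : ℕ)

/-- The ordered matching whose edges are the rows of an arrangement. -/
noncomputable def matching : Finset (Finset ℕ) :=
  univ.image σ.edge

theorem coe_injective : Function.Injective fun p ↦ (σ p : ℕ) :=
  Subtype.val_injective.comp σ.injective

theorem card_edge (i : Fin n) : #(σ.edge i) = r := by
  rw [edge, card_image_of_injective _ fun c d h ↦ (Prod.mk.inj (σ.coe_injective h)).2, card_univ,
    Fintype.card_fin]

theorem disjoint_edge {i j : Fin n} (hij : i ≠ j) : Disjoint (σ.edge i) (σ.edge j) := by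
  simp only [edge, disjoint_left, mem_image, mem_univ, true_and, not_exists]
  rintro _ ⟨c, rfl⟩ d h
  exact hij (Prod.mk.inj (σ.coe_injective h)).1.symm

theorem biUnion_matching : σ.matching.biUnion id = Icc 1 (r * n) := by
  ext x
  simp only [matching, edge, mem_biUnion, mem_image, mem_univ, true_and, id, exists_exists_eq_and]
  constructor
  · rintro ⟨i, c, rfl⟩
    exact (σ (i, c)).2
  · exact fun hx ↦ ⟨(σ.symm ⟨x, hx⟩).1, (σ.symm ⟨x, hx⟩).2, by simp⟩

theorem card_of_mem_matching {e : Finset ℕ} (he : e ∈ σ.matching) : #e = r := by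
  obtain ⟨i, -, rfl⟩ := mem_image.mp he
  exact σ.card_edge i

theorem disjoint_of_mem_matching {e f : Finset ℕ} (he : e ∈ σ.matching) (hf : f ∈ σ.matching)
    (hef : e ≠ f) : Disjoint e f := by
  obtain ⟨i, -, rfl⟩ := mem_image.mp he
  obtain ⟨j, -, rfl⟩ := mem_image.mp hf
  exact σ.disjoint_edge fun hij ↦ hef (congrArg σ.edge hij)

theorem edge_injective [NeZero r] : Function.Injective σ.edge := fun i j h ↦ by
  by_contra hij
  have hempty : σ.edge i = ∅ := disjoint_self.mp (by simpa only [← h] using σ.disjoint_edge hij)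
  exact NeZero.ne r (by rw [← σ.card_edge i, hempty, card_empty])

theorem matching_mem_matchingFamilies [NeZero r] : σ.matching ∈ matchingFamilies r n := by
  have hM : IsOrderedMatching r n σ.matching := by
    refine ⟨?_, fun e ↦ σ.card_of_mem_matching, fun e he f ↦ σ.disjoint_of_mem_matching he,
      σ.biUnion_matching⟩
    rw [matching, card_image_of_injective _ σ.edge_injective, card_univ, Fintype.card_fin]
  refine mem_filter.mpr ⟨mem_powerset.mpr fun e he ↦ mem_powerset.mpr ?_, hM⟩
  exact σ.biUnion_matching ▸ subset_biUnion_of_mem id he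

theorem exists_matching_eq {M : Finset (Finset ℕ)} (hM : M ∈ matchingFamilies r n) :
    ∃ σ : Arrangement r n, σ.matching = M := by
  obtain ⟨-, hcard, hr, hdisj, hunion⟩ := mem_filter.mp hM
  let E : Fin n ≃ M := (M.equivFinOfCardEq hcard).symm
  have hmem : ∀ p : Fin n × Fin r, vertex r (E p.1) p.2 ∈ Icc 1 (r * n) := fun p ↦
    hunion ▸ mem_biUnion.mpr ⟨E p.1, (E p.1).2, vertex_mem (hr _ (E p.1).2) p.2⟩
  let f : Fin n × Fin r → Icc 1 (r * n) := fun p ↦ ⟨_, hmem p⟩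
  have hf : Function.Injective f := by
    rintro ⟨i, c⟩ ⟨j, d⟩ h
    have hv : vertex r (E i) c = vertex r (E j) d := congrArg Subtype.val h
    obtain rfl : i = j := by
      by_contra hij
      refine disjoint_left.mp (hdisj _ (E i).2 _ (E j).2 fun h ↦ hij (E.injective (Subtype.ext h)))
        (vertex_mem (hr _ (E i).2) c) ?_
      exact hv ▸ vertex_mem (hr _ (E j).2) d
    rw [(vertex_strictMono (hr _ (E i).2)).injective hv]
  have hbij : Function.Bijective f :=
    (Fintype.bijective_iff_injective_and_card f).mpr ⟨hf, by simp [mul_comm]⟩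
  refine ⟨Equiv.ofBijective f hbij, ?_⟩
  have hedge : edge (Equiv.ofBijective f hbij) = fun i ↦ (E i : Finset ℕ) :=
    funext fun i ↦ image_vertex_univ (hr _ (E i).2)
  rw [matching, hedge]
  ext e
  simp only [mem_image, mem_univ, true_and]
  exact ⟨fun ⟨i, hi⟩ ↦ hi ▸ (E i).2, fun he ↦ ⟨E.symm ⟨e, he⟩, by simp⟩⟩

theorem edge_trans (g : Equiv.Perm (Icc 1 (r * n))) (i : Fin n) :
    edge (σ.trans g) i = (σ.edge i).image (Equiv.Perm.ofSubtype g) := by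
  simp only [edge, image_image, Function.comp_def, Equiv.trans_apply,
    Equiv.Perm.ofSubtype_apply_coe]

theorem matching_trans (g : Equiv.Perm (Icc 1 (r * n))) :
    matching (σ.trans g) = σ.matching.image (image (Equiv.Perm.ofSubtype g)) := by
  rw [matching, matching, image_image]
  exact image_congr fun i _ ↦ σ.edge_trans g i

theorem card_matching_eq_le (τ τ' : Arrangement r n) :
    #{σ : Arrangement r n | σ.matching = τ.matching} ≤
      #{σ : Arrangement r n | σ.matching = τ'.matching} := by
  refine card_le_card_of_injOn (fun σ ↦ σ.trans (τ.symm.trans τ')) (fun σ hσ ↦ ?_)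
    fun σ _ σ' _ h ↦ ?_
  · have hτ' : τ' = τ.trans (τ.symm.trans τ') := by simp [← Equiv.trans_assoc]
    simp only [coe_filter, mem_univ, true_and, Set.mem_ofPred_eq] at hσ ⊢
    rw [matching_trans, hσ, ← matching_trans, ← hτ']
  · exact Equiv.ext fun p ↦ (τ.symm.trans τ').injective (Equiv.congr_fun h p)

theorem nonempty : Nonempty (Arrangement r n) :=
  Fintype.card_eq.mp (by simp [mul_comm])

end Arrangement

theorem prob_eq_card_arrangement_div [NeZero r] (A : Finset (Finset ℕ) → Prop) :
    prob r n A = #{σ : Arrangement r n | A σ.matching} / Fintype.card (Arrangement r n) := by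
  obtain ⟨τ⟩ := Arrangement.nonempty (r := r) (n := n)
  have hfiber : ∀ M ∈ matchingFamilies r n, #{σ : Arrangement r n | σ.matching = M} =
      #{σ : Arrangement r n | σ.matching = τ.matching} := fun M hM ↦ by
    obtain ⟨τ', rfl⟩ := Arrangement.exists_matching_eq hM
    exact (Arrangement.card_matching_eq_le τ' τ).antisymm (Arrangement.card_matching_eq_le τ τ')
  have hpos : (#{σ : Arrangement r n | σ.matching = τ.matching} : ℝ) ≠ 0 :=
    Nat.cast_ne_zero.mpr (card_ne_zero_of_mem (mem_filter.mpr ⟨mem_univ τ, rfl⟩))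
  have hcount := card_filter_comp_eq_mul (fun σ ↦ σ.matching_mem_matchingFamilies) hfiber
  have hall := hcount fun _ ↦ True
  simp only [filter_true, card_univ] at hall
  rw [prob, hcount, hall, Nat.cast_mul, Nat.cast_mul, mul_div_mul_right _ _ hpos]

theorem prob_mul_le_of_card_mul_le [NeZero r] {A : Finset (Finset ℕ) → Prop}
    {B : Finset (Arrangement r n)} {a b : ℕ} (hB : ∀ σ : Arrangement r n, A σ.matching → σ ∈ B)
    (h : #B * a ≤ b * Fintype.card (Arrangement r n)) : prob r n A * a ≤ b := by
  have hΩ : 0 < (Fintype.card (Arrangement r n) : ℝ) :=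
    Nat.cast_pos.mpr (Fintype.card_pos_iff.mpr Arrangement.nonempty)
  have hA : #{σ : Arrangement r n | A σ.matching} ≤ #B :=
    card_le_card fun σ hσ ↦ hB σ (mem_filter.mp hσ).2
  rw [prob_eq_card_arrangement_div, div_mul_eq_mul_div, div_le_iff₀ hΩ]
  exact_mod_cast (Nat.mul_le_mul_right a hA).trans h

end Arrangements

section Probability

open Filter Topology

variable {r n : ℕ} {A B : Finset (Finset ℕ) → Prop}

theorem prob_nonneg : 0 ≤ prob r n A := by
  unfold prob
  positivity

theorem prob_mono (h : ∀ M, A M → B M) : prob r n A ≤ prob r n B := by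
  unfold prob
  gcongr
  exact h _

theorem prob_add_prob_not [NeZero r] : (prob r n A + prob r n fun M ↦ ¬ A M) = 1 := by
  obtain ⟨σ⟩ := Arrangement.nonempty (r := r) (n := n)
  have hne : (#(matchingFamilies r n) : ℝ) ≠ 0 :=
    Nat.cast_ne_zero.mpr (card_ne_zero_of_mem σ.matching_mem_matchingFamilies)
  rw [prob, prob, ← add_div, ← Nat.cast_add, card_filter_add_card_filter_not, div_self hne]

theorem prob_or_le : (prob r n fun M ↦ A M ∨ B M) ≤ prob r n A + prob r n B := by
  rw [prob, prob, prob, ← add_div, ← Nat.cast_add]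
  gcongr
  refine (card_le_card fun M hM ↦ ?_).trans (card_union_le _ _)
  simpa only [mem_filter, mem_union, and_or_left] using hM

theorem tendsto_prob_and [NeZero r] {A B : ℕ → Finset (Finset ℕ) → Prop}
    (hA : Tendsto (fun n ↦ prob r n fun M ↦ ¬ A n M) atTop (𝓝 0))
    (hB : Tendsto (fun n ↦ prob r n fun M ↦ ¬ B n M) atTop (𝓝 0)) :
    Tendsto (fun n ↦ prob r n fun M ↦ A n M ∧ B n M) atTop (𝓝 1) := by
  have hbad : Tendsto (fun n ↦ prob r n fun M ↦ ¬ (A n M ∧ B n M)) atTop (𝓝 0) := by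
    refine squeeze_zero (fun _ ↦ prob_nonneg) (fun n ↦ ?_) (by simpa using hA.add hB)
    simp only [not_and_or]
    exact prob_or_le
  have hgood : (fun n ↦ prob r n fun M ↦ A n M ∧ B n M) =
      fun n ↦ 1 - prob r n fun M ↦ ¬ (A n M ∧ B n M) :=
    funext fun n ↦ eq_sub_of_add_eq prob_add_prob_not
  simpa only [hgood, sub_zero] using hbad.const_sub 1

end Probability

section UpperTail

variable {r n k : ℕ} [NeZero r] {P : Finset (Finset ℕ)}

theorem exists_hasDirection_of_le_zClique {σ : Arrangement r n}
    (hk : k ≤ zClique r {P} σ.matching) :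
    ∃ (i : Fin k ↪ Fin n) (π : Fin k → Equiv.Perm (Fin r)),
      ∀ c, HasDirection (Ascends r P c) fun a ↦ σ (i a, π a c) := by
  obtain ⟨K, hKM, hK, rfl⟩ := exists_isClique_card_eq hk
  obtain ⟨E, hEK, hE⟩ := hK.exists_hasDirection_vertex
  have hrow : ∀ a, ∃ i, σ.edge i = E a := fun a ↦ by
    simpa only [Arrangement.matching, mem_image, mem_univ, true_and] using hKM (hEK a)
  choose i hi using hrow
  choose π hπ using fun a ↦ exists_perm_apply_eq_vertex (hK.1 _ (hEK a)) (hi a)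
  have hiinj : Function.Injective i := fun a b hab ↦ by
    have hEab : E a = E b := by rw [← hi, ← hi, hab]
    exact (hE 0).injective (congrArg (vertex r · 0) hEab)
  refine ⟨⟨i, hiinj⟩, π, fun c ↦ ?_⟩
  have hcol : (fun a ↦ vertex r (E a) c) = fun a ↦ (σ (i a, π a c) : ℕ) :=
    funext fun a ↦ (congrFun (hπ a) c).symm
  exact (congrArg (HasDirection _) hcol).mp (hE c)

theorem card_le_zClique_mul_factorial_pow_le :
    #{σ : Arrangement r n | k ≤ zClique r {P} σ.matching} * k.factorial ^ r ≤
      (n * r.factorial) ^ k * Fintype.card (Arrangement r n) := by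
  let S (q : (Fin k ↪ Fin n) × (Fin k → Equiv.Perm (Fin r))) : Finset (Arrangement r n) :=
    {σ | ∀ c, HasDirection (Ascends r P c) fun a ↦ σ (q.1 a, q.2 a c)}
  have hS : ∀ q, #(S q) * k.factorial ^ r ≤ Fintype.card (Arrangement r n) := fun q ↦ by
    let J : Fin k × Fin r ↪ Fin n × Fin r :=
      (Equiv.prodShear (Equiv.refl _) q.2).toEmbedding.trans (q.1.prodMap (.refl _))
    have hJ := card_hasDirection_mul_factorial_pow_le J fun σ (hσ : σ ∈ S q) ↦ (mem_filter.mp hσ).2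
    rwa [Fintype.card_fin, Fintype.card_fin] at hJ
  have hcover : ({σ | k ≤ zClique r {P} σ.matching} : Finset (Arrangement r n)) ⊆
      univ.biUnion S := fun σ hσ ↦ by
    obtain ⟨i, π, h⟩ := exists_hasDirection_of_le_zClique (mem_filter.mp hσ).2
    exact mem_biUnion.mpr ⟨(i, π), mem_univ _, mem_filter.mpr ⟨mem_univ σ, h⟩⟩
  calc _ ≤ (∑ q, #(S q)) * k.factorial ^ r := by
        gcongr
        exact (card_le_card hcover).trans card_biUnion_le
    _ ≤ Fintype.card ((Fin k ↪ Fin n) × (Fin k → Equiv.Perm (Fin r))) *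
          Fintype.card (Arrangement r n) := by
        rw [sum_mul]
        exact sum_le_card_nsmul _ _ _ fun q _ ↦ hS q
    _ ≤ _ := by
        gcongr
        simpa [Fintype.card_perm, mul_pow] using
          Nat.mul_le_mul_right _ (Nat.descFactorial_le_pow n k)

theorem prob_le_zClique_le_half_pow (hk : 2 * (Real.exp 1 ^ r * r.factorial * n) ≤ (k : ℝ) ^ r) :
    (prob r n fun M ↦ k ≤ zClique r {P} M) ≤ (1 / 2) ^ k := by
  have hprob : (prob r n fun M ↦ k ≤ zClique r {P} M) * (k.factorial : ℝ) ^ r ≤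
      (n * r.factorial) ^ k := by
    have hbound := prob_mul_le_of_card_mul_le (n := n) (A := fun M ↦ k ≤ zClique r {P} M)
      (fun σ hσ ↦ mem_filter.mpr ⟨mem_univ σ, hσ⟩) card_le_zClique_mul_factorial_pow_le
    exact_mod_cast hbound
  have hstirling : (k : ℝ) ^ k ≤ Real.exp 1 ^ k * k.factorial := by
    rw [Real.exp_one_pow, ← div_le_iff₀ (by positivity)]
    simpa using Real.pow_div_factorial_le_exp k k.cast_nonneg k
  refine le_of_mul_le_mul_right ?_ (by positivity : 0 < (Real.exp 1 ^ k * k.factorial) ^ r)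
  calc _ = Real.exp 1 ^ (k * r) *
          ((prob r n fun M ↦ k ≤ zClique r {P} M) * (k.factorial : ℝ) ^ r) := by ring
    _ ≤ Real.exp 1 ^ (k * r) * (n * r.factorial) ^ k := by gcongr
    _ = (1 / 2) ^ k * (2 * (Real.exp 1 ^ r * r.factorial * n)) ^ k := by
        rw [← mul_pow, mul_comm k, pow_mul, ← mul_pow]
        ring
    _ ≤ (1 / 2) ^ k * ((k : ℝ) ^ r) ^ k := by gcongr
    _ = (1 / 2) ^ k * ((k : ℝ) ^ k) ^ r := by rw [pow_right_comm]
    _ ≤ (1 / 2) ^ k * (Real.exp 1 ^ k * k.factorial) ^ r := by gcongr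

end UpperTail

section LowerTail

variable {r n m : ℕ} {Ps : Set (Finset (Finset ℕ))} {K : Finset (Finset ℕ)}

theorem IsClique.card_filter_row_eq_vertex_le_zClique {σ : Arrangement r n}
    {f : Fin n × Fin r → ℕ} (hK : IsClique r Ps K) (hσ : Refines σ f) :
    #{e ∈ K | ∃ i, (fun c ↦ f (i, c)) = vertex r e} ≤ zClique r Ps σ.matching := by
  let ψ : ℕ → ℕ := Function.extend (fun p ↦ (σ p : ℕ)) f 0
  have hψ : ∀ p, ψ (σ p) = f p := σ.coe_injective.extend_apply f 0
  have hψmono : MonotoneOn ψ ↑(σ.matching.biUnion id) := by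
    intro x hx y hy hxy
    rw [σ.biUnion_matching] at hx hy
    obtain ⟨p, hp⟩ := σ.surjective ⟨x, hx⟩
    obtain ⟨q, hq⟩ := σ.surjective ⟨y, hy⟩
    obtain rfl : (σ p : ℕ) = x := congrArg Subtype.val hp
    obtain rfl : (σ q : ℕ) = y := congrArg Subtype.val hq
    rw [hψ, hψ]
    exact le_of_not_gt fun hlt ↦ (hσ hlt).not_ge hxy
  refine (card_le_card fun e he ↦ ?_).trans (hK.card_filter_mem_image_le_zClique
    (fun e ↦ σ.card_of_mem_matching) (fun e he f ↦ σ.disjoint_of_mem_matching he) hψmono)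
  obtain ⟨heK, i, hi⟩ := mem_filter.mp he
  refine mem_filter.mpr ⟨heK, mem_image.mpr ⟨σ.edge i, mem_image_of_mem _ (mem_univ i), ?_⟩⟩
  rw [Arrangement.edge, image_image, ← image_vertex_univ (hK.1 e heK), ← hi]
  exact image_congr fun c _ ↦ hψ (i, c)

theorem IsClique.exists_missing_rows {σ : Arrangement r n} {f : Fin n × Fin r → ℕ}
    (hK : IsClique r Ps K) (hσ : Refines σ f) (hm : zClique r Ps σ.matching + m ≤ #K) :
    ∃ A ⊆ K.image (vertex r), #A = m ∧ ∀ i, (fun c ↦ f (i, c)) ∉ A := by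
  have hinj : Set.InjOn (vertex r) K := fun e he e' he' h ↦ by
    rw [← image_vertex_univ (hK.1 e he), h, image_vertex_univ (hK.1 e' he')]
  have hsplit := card_filter_add_card_filter_not (s := K)
    fun e ↦ ∃ i, (fun c ↦ f (i, c)) = vertex r e
  have hhit := hK.card_filter_row_eq_vertex_le_zClique hσ
  obtain ⟨L, hL, rfl⟩ := exists_subset_card_eq (n := m)
    (s := {e ∈ K | ¬ ∃ i, (fun c ↦ f (i, c)) = vertex r e}) (by omega)
  have hLK : L ⊆ K := hL.trans (filter_subset _ _)
  refine ⟨L.image (vertex r), image_subset_image hLK,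
    card_image_of_injOn (hinj.mono (coe_subset.mpr hLK)), fun i hi ↦ ?_⟩
  obtain ⟨e, he, hei⟩ := mem_image.mp hi
  exact (mem_filter.mp (hL he)).2 ⟨i, hei.symm⟩

theorem IsClique.card_zClique_add_le_mul_pow_le (hK : IsClique r Ps K) :
    #{σ : Arrangement r n | zClique r Ps σ.matching + m ≤ #K} * ((r * #K) ^ r) ^ n ≤
      (#K).choose m * ((r * #K) ^ r - m) ^ n * Fintype.card (Arrangement r n) := by
  let V := K.biUnion id
  let s := K.image (vertex r)
  let D := Fintype.piFinset fun _ : Fin r ↦ V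
  let C := {f ∈ Fintype.piFinset fun _ : Fin n × Fin r ↦ V |
    ∃ A ⊆ s, #A = m ∧ ∀ i, (fun c ↦ f (i, c)) ∉ A}
  have hV : #V = r * #K := hK.card_biUnion
  have hD : #D = (r * #K) ^ r := by simp [D, hV]
  have hsD : s ⊆ D := image_subset_iff.mpr fun e he ↦ Fintype.mem_piFinset.mpr fun c ↦
    mem_biUnion.mpr ⟨e, he, vertex_mem (hK.1 e he) c⟩
  have hrefine := card_mul_card_pow_le_of_refines V (C := C)
    (B := ({σ | zClique r Ps σ.matching + m ≤ #K} : Finset (Arrangement r n)))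
    fun σ hσ f hfV hf ↦ mem_filter.mpr
      ⟨Fintype.mem_piFinset.mpr hfV, hK.exists_missing_rows hf (mem_filter.mp hσ).2⟩
  have hmissing : #C ≤ (#s).choose m * (#D - m) ^ Fintype.card (Fin n) := by
    rw [← card_image_of_injective C Function.curry_injective]
    refine card_le_choose_mul_sub_pow hsD ?_ ?_ <;> refine forall_mem_image.mpr fun f hf ↦ ?_
    · exact fun i ↦ Fintype.mem_piFinset.mpr fun c ↦
        Fintype.mem_piFinset.mp (mem_filter.mp hf).1 (i, c)
    · exact (mem_filter.mp hf).2
  rw [hV, Fintype.card_prod, Fintype.card_fin, Fintype.card_fin, mul_comm n, pow_mul] at hrefine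
  rw [hD, Fintype.card_fin] at hmissing
  refine hrefine.trans (Nat.mul_le_mul_right _ (hmissing.trans ?_))
  gcongr
  exact card_image_le

theorem sub_pow_le_pow_mul_exp {x y : ℝ} (hx : 0 < x) (hyx : y ≤ x) (n : ℕ) :
    (x - y) ^ n ≤ x ^ n * Real.exp (-(n * (y / x))) := by
  have hbase : x - y ≤ x * Real.exp (-(y / x)) := by
    calc x - y = x * (1 - y / x) := by field_simp
      _ ≤ x * Real.exp (-(y / x)) := by gcongr; exact Real.one_sub_le_exp_neg _
  calc _ ≤ (x * Real.exp (-(y / x))) ^ n := pow_le_pow_left₀ (sub_nonneg.mpr hyx) hbase n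
    _ = _ := by rw [mul_pow, ← Real.exp_nat_mul, mul_neg]

theorem four_mul_exp_neg_three_le : 4 * Real.exp (-3) ≤ 1 / 2 := by
  have h8 : (2 : ℝ) ^ 3 ≤ Real.exp 3 := by
    rw [show (3 : ℝ) = (3 : ℕ) by norm_num, ← Real.exp_one_pow]
    gcongr
    linarith [Real.add_one_le_exp 1]
  rw [Real.exp_neg, ← div_eq_mul_inv, div_le_iff₀ (Real.exp_pos 3)]
  linarith

theorem IsClique.prob_zClique_lt_le_half_pow [NeZero r] (hK : IsClique r Ps K)
    (hKm : #K = 2 * m) (hm : 3 * (r * (2 * m)) ^ r ≤ n) :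
    (prob r n fun M ↦ zClique r Ps M < m) ≤ (1 / 2) ^ m := by
  rcases m.eq_zero_or_pos with rfl | hmpos
  · simp [prob]
  set X := (r * (2 * m)) ^ r
  have hbase : m ≤ r * (2 * m) := by nlinarith [NeZero.one_le (n := r)]
  have hmX : m ≤ X := hbase.trans (Nat.le_self_pow (NeZero.ne r) _)
  have hXpos : (0 : ℝ) < X := Nat.cast_pos.mpr (hmpos.trans_le hmX)
  have hprob : (prob r n fun M ↦ zClique r Ps M < m) * (X : ℝ) ^ n ≤
      (2 * m).choose m * ((X : ℝ) - m) ^ n := by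
    have hcount := hK.card_zClique_add_le_mul_pow_le (n := n) (m := m)
    rw [hKm] at hcount
    rw [← Nat.cast_sub hmX]
    exact_mod_cast prob_mul_le_of_card_mul_le
      (fun σ hσ ↦ mem_filter.mpr ⟨mem_univ σ, by omega⟩) hcount
  have hexponent : 3 * (m : ℝ) ≤ n * (m / X) := by
    rw [mul_div_assoc', le_div_iff₀ hXpos]
    have : (3 * X : ℝ) ≤ n := mod_cast hm
    nlinarith
  refine le_of_mul_le_mul_right ?_ (pow_pos hXpos n)
  calc _ ≤ (2 * m).choose m * ((X : ℝ) - m) ^ n := hprob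
    _ ≤ 4 ^ m * (X ^ n * Real.exp (-(n * (m / X)))) := by
        gcongr
        · exact pow_nonneg (sub_nonneg.mpr (Nat.cast_le.mpr hmX)) n
        · exact_mod_cast Nat.centralBinom_le_four_pow m
        · exact sub_pow_le_pow_mul_exp hXpos (mod_cast hmX) n
    _ ≤ 4 ^ m * (X ^ n * Real.exp (-(3 * m))) := by gcongr
    _ = (4 * Real.exp (-3)) ^ m * X ^ n := by
        rw [mul_pow, ← Real.exp_nat_mul]
        ring_nf
    _ ≤ (1 / 2) ^ m * X ^ n := by
        gcongr
        exact four_mul_exp_neg_three_le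

end LowerTail

section Asymptotics

open Filter Topology

variable {r : ℕ} [NeZero r]

theorem tendsto_natCast_rpow_one_div_atTop :
    Tendsto (fun n : ℕ ↦ (n : ℝ) ^ ((1 : ℝ) / r)) atTop atTop :=
  (tendsto_rpow_atTop (by have := NeZero.pos r; positivity)).comp tendsto_natCast_atTop_atTop

theorem natCast_rpow_one_div_pow (n : ℕ) : ((n : ℝ) ^ ((1 : ℝ) / r)) ^ r = n := by
  rw [one_div, Real.rpow_inv_natCast_pow n.cast_nonneg (NeZero.ne r)]

theorem exists_tendsto_prob_zClique_lt {Ps : Set (Finset (Finset ℕ))}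
    (hPs : ∀ k, ∃ K, IsClique r Ps K ∧ #K = k) :
    ∃ c : ℝ, 0 < c ∧ Tendsto
      (fun n : ℕ ↦ prob r n fun M ↦ (zClique r Ps M : ℝ) < c * (n : ℝ) ^ ((1 : ℝ) / r))
      atTop (𝓝 0) := by
  have hr : (0 : ℝ) < r := Nat.cast_pos.mpr (NeZero.pos r)
  let y (n : ℕ) : ℝ := (n : ℝ) ^ ((1 : ℝ) / r) / (6 * r)
  have hy : Tendsto y atTop atTop :=
    tendsto_natCast_rpow_one_div_atTop.atTop_div_const (by positivity)
  have hsmall : ∀ n, 3 * (r * (2 * ⌊y n⌋₊)) ^ r ≤ n := fun n ↦ by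
    have hy0 : 0 ≤ y n := by positivity
    have h3 : (3 : ℝ) ≤ 3 ^ r := le_self_pow₀ (by norm_num) (NeZero.ne r)
    rify
    calc (3 : ℝ) * (r * (2 * ⌊y n⌋₊)) ^ r ≤ 3 ^ r * (r * (2 * y n)) ^ r := by
          gcongr
          exact Nat.floor_le hy0
      _ = ((n : ℝ) ^ ((1 : ℝ) / r)) ^ r := by
          rw [← mul_pow]
          congr 1
          simp only [y]
          field_simp
          ring
      _ = n := natCast_rpow_one_div_pow n
  have hhalf : Tendsto (fun n ↦ (1 / 2 : ℝ) ^ ⌊y n⌋₊) atTop (𝓝 0) :=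
    (tendsto_pow_atTop_nhds_zero_of_lt_one (by norm_num) (by norm_num)).comp
      (tendsto_nat_floor_atTop.comp hy)
  refine ⟨1 / (12 * r), by positivity, squeeze_zero' (.of_forall fun _ ↦ prob_nonneg) ?_ hhalf⟩
  filter_upwards [hy.eventually_ge_atTop 1] with n hn
  obtain ⟨K, hK, hKcard⟩ := hPs (2 * ⌊y n⌋₊)
  refine (prob_mono fun M hM ↦ ?_).trans (hK.prob_zClique_lt_le_half_pow hKcard (hsmall n))
  have hhalf_y : 1 / (12 * r) * (n : ℝ) ^ ((1 : ℝ) / r) = y n / 2 := by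
    simp only [y]
    field_simp
    ring
  rw [hhalf_y] at hM
  exact_mod_cast hM.trans (Nat.div_two_lt_floor hn)

theorem exists_tendsto_prob_lt_zClique (P : Finset (Finset ℕ)) :
    ∃ c : ℝ, 0 < c ∧ Tendsto
      (fun n : ℕ ↦ prob r n fun M ↦ c * (n : ℝ) ^ ((1 : ℝ) / r) < zClique r {P} M)
      atTop (𝓝 0) := by
  let c : ℝ := 2 * Real.exp 1 * r.factorial
  have hc : 0 < c := by positivity
  let y (n : ℕ) : ℝ := c * (n : ℝ) ^ ((1 : ℝ) / r)
  have hy : Tendsto y atTop atTop := tendsto_natCast_rpow_one_div_atTop.const_mul_atTop hc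
  have hlarge : ∀ n : ℕ, 2 * (Real.exp 1 ^ r * r.factorial * n) ≤ (⌈y n⌉₊ : ℝ) ^ r := fun n ↦ by
    have h2 : (2 : ℝ) ≤ 2 ^ r := le_self_pow₀ (by norm_num) (NeZero.ne r)
    have hfac : (r.factorial : ℝ) ≤ r.factorial ^ r :=
      le_self_pow₀ (mod_cast r.factorial_pos) (NeZero.ne r)
    calc _ ≤ 2 ^ r * (Real.exp 1 ^ r * r.factorial ^ r * n) := by gcongr
      _ = y n ^ r := by
          simp only [y, c, mul_pow, natCast_rpow_one_div_pow]
          ring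
      _ ≤ _ := by gcongr; exact Nat.le_ceil _
  have hhalf : Tendsto (fun n ↦ (1 / 2 : ℝ) ^ ⌈y n⌉₊) atTop (𝓝 0) :=
    (tendsto_pow_atTop_nhds_zero_of_lt_one (by norm_num) (by norm_num)).comp
      (tendsto_nat_ceil_atTop.comp hy)
  refine ⟨c, hc, squeeze_zero (fun _ ↦ prob_nonneg) (fun n ↦ ?_) hhalf⟩
  exact (prob_mono fun M hM ↦ Nat.ceil_le.mpr hM.le).trans (prob_le_zClique_le_half_pow (hlarge n))

end Asymptotics

/-- **Theorem (single collectable pattern).** For every `r ≥ 2` and every collectable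
`r`-pattern `P`, a.a.s. `z_{{P}}(RM_n^(r)) = Θ(n^(1/r))`. -/
theorem aas_single_collectable (r : ℕ) (hr : 2 ≤ r) (P : Finset (Finset ℕ))
    (hP : IsOrderedMatching r 2 P) (hcP : Collectable r P) :
    ∃ c₁ c₂ : ℝ, 0 < c₁ ∧ 0 < c₂ ∧
      Filter.Tendsto
        (fun n : ℕ => prob r n (fun M =>
          c₁ * (n : ℝ) ^ ((1 : ℝ) / (r : ℝ)) ≤ (zClique r {P} M : ℝ) ∧
          (zClique r {P} M : ℝ) ≤ c₂ * (n : ℝ) ^ ((1 : ℝ) / (r : ℝ))))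
        Filter.atTop (nhds 1) := by
  have : NeZero r := ⟨by omega⟩
  obtain ⟨c₁, hc₁, hlower⟩ := exists_tendsto_prob_zClique_lt hcP
  obtain ⟨c₂, hc₂, hupper⟩ := exists_tendsto_prob_lt_zClique (r := r) P
  exact ⟨c₁, c₂, hc₁, hc₂,
    tendsto_prob_and (by simpa only [not_le] using hlower) (by simpa only [not_le] using hupper)⟩
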